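/- With κ as defined, for every real t that is not a multiple zero of Z, π·κ'(t) = (Z(t)·Z'(t)·ϑ''(t) + Z'(t)²·ϑ'(t) − Z(t)·Z''(t)·ϑ'(t)) / (Z'(t)² + Z(t)²·ϑ'(t)²). -/

import Mathlib

open Complex Real

/-!
Write `W = Z' - i ϑ' Z`. Differentiating `ζ(1/2 + it) = Z e^{-iϑ}` gives
`i ζ'(1/2 + it) = W e^{-iϑ}`, so the definition of `κ` reads `e^{2πiκ} W = conj W` wherever `W ≠ 0`,
and taking logarithmic derivatives, `π κ' = -Im (W' / W)`, which is the formula.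

It remains to see that `W ≠ 0` unless `Z = Z' = 0`, that is, that `ζ'` vanishes on the critical line
only where `ζ` does. On that line the completed zeta function is real, so its logarithmic derivative
is purely imaginary; at a zero of `ζ'` that is not a zero of `ζ` only the Gamma factor contributes,
and `Re ψ(1/4 + it/2) = log π`. Comparing `Re ψ` with a telescoping sum of logarithms confines `t²`
to a short interval around `4π²`, and on that interval the Euler–Maclaurin formula for `ζ'`, split
at `N = 2` with three correction terms, is dominated by its main term.
-/

section Digamma

open Filter Topology MeasureTheory

/-- The kernel `e⁻ˣ - (1 - x / n)ⁿ 1_{x ≤ n}`, nonnegative on `(0, ∞)`, whose Mellin transform is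
the error `Γ - GammaSeq · n` of Euler's limit formula. -/
noncomputable def gammaSeqErrorKernel (n : ℕ) (x : ℝ) : ℝ :=
  rexp (-x) - (Set.Iic (n : ℝ)).indicator (fun x ↦ (1 - x / n) ^ n) x

lemma gammaSeqErrorKernel_nonneg (n : ℕ) (x : ℝ) : 0 ≤ gammaSeqErrorKernel n x := by
  rw [gammaSeqErrorKernel, sub_nonneg]
  exact Set.indicator_apply_le' (fun hx ↦ one_sub_div_pow_le_exp_neg hx) fun _ ↦ (exp_pos _).le

lemma hasMellin_gammaSeqErrorKernel {n : ℕ} (hn : n ≠ 0) {s : ℂ} (hs : 0 < s.re) :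
    HasMellin (fun x ↦ (gammaSeqErrorKernel n x : ℂ)) s (Complex.Gamma s - GammaSeq s n) := by
  have hΓ : HasMellin (fun x : ℝ ↦ ((rexp (-x) : ℝ) : ℂ)) s (Complex.Gamma s) := by
    refine ⟨?_, by rw [Complex.Gamma_eq_integral hs, GammaIntegral_eq_mellin]⟩
    simpa only [MellinConvergent, smul_eq_mul, mul_comm] using Complex.GammaIntegral_convergent hs
  set g : ℝ → ℂ := (Set.Iic (n : ℝ)).indicator fun x ↦ ((1 - x / n : ℝ) : ℂ) ^ n
  have hmul (x : ℝ) : (x : ℂ) ^ (s - 1) • g x =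
      (Set.Iic (n : ℝ)).indicator
        (fun x : ℝ ↦ (x : ℂ) ^ (s - 1) * ((1 - x / n : ℝ) : ℂ) ^ n) x := by
    simp only [g, Set.indicator_apply, smul_eq_mul, mul_ite, mul_zero]
  have hset : Set.Iic (n : ℝ) ∩ Set.Ioi 0 = Set.Ioc 0 (n : ℝ) := by
    ext x; simp [and_comm]
  have hseq : HasMellin g s (GammaSeq s n) := by
    constructor
    · rw [MellinConvergent, funext hmul, integrableOn_indicator_iff measurableSet_Iic, hset,
        ← intervalIntegrable_iff_integrableOn_Ioc_of_le n.cast_nonneg]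
      refine (intervalIntegral.intervalIntegrable_cpow' (by simpa using hs)).mul_continuousOn ?_
      fun_prop
    · rw [mellin, funext hmul, setIntegral_indicator measurableSet_Iic, Set.inter_comm, hset,
        GammaSeq_eq_approx_Gamma_integral hs hn, intervalIntegral.integral_of_le n.cast_nonneg]
      simp only [ofReal_pow, mul_comm]
  convert! hasMellin_sub hΓ.1 hseq.1 using 1
  · ext x
    by_cases hx : x ≤ n <;> simp [gammaSeqErrorKernel, g, hx]
  · rw [hΓ.2, hseq.2]

lemma integral_rpow_mul_eq_norm_mellin {f : ℝ → ℝ} (hf : ∀ x, 0 ≤ f x) (a : ℝ) :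
    ∫ x in Set.Ioi 0, x ^ (a - 1) * f x = ‖mellin (fun x ↦ (f x : ℂ)) a‖ := by
  have hmellin : mellin (fun x ↦ (f x : ℂ)) a = (∫ x in Set.Ioi 0, x ^ (a - 1) * f x : ℝ) := by
    rw [mellin, ← integral_complex_ofReal]
    refine setIntegral_congr_fun measurableSet_Ioi fun x hx ↦ ?_
    simp [ofReal_cpow (le_of_lt hx)]
  rw [hmellin, Complex.norm_of_nonneg]
  exact setIntegral_nonneg measurableSet_Ioi fun x hx ↦
    mul_nonneg (rpow_nonneg (le_of_lt hx) _) (hf x)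

lemma integrableOn_rpow_mul_of_mellinConvergent {f : ℝ → ℝ} (hf : ∀ x, 0 ≤ f x) {a : ℝ}
    (ha : MellinConvergent (fun x ↦ (f x : ℂ)) a) :
    IntegrableOn (fun x ↦ x ^ (a - 1) * f x) (Set.Ioi 0) := by
  refine IntegrableOn.congr_fun (Integrable.norm ha) (fun x hx ↦ ?_) measurableSet_Ioi
  simp [norm_cpow_eq_rpow_re_of_pos hx, abs_of_nonneg (hf x)]

lemma norm_mellin_le_add {f : ℝ → ℝ} (hf : ∀ x, 0 ≤ f x) {s : ℂ} {a b : ℝ} (has : a ≤ s.re)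
    (hsb : s.re ≤ b) (ha : MellinConvergent (fun x ↦ (f x : ℂ)) a)
    (hb : MellinConvergent (fun x ↦ (f x : ℂ)) b) :
    ‖mellin (fun x ↦ (f x : ℂ)) s‖ ≤
      ‖mellin (fun x ↦ (f x : ℂ)) a‖ + ‖mellin (fun x ↦ (f x : ℂ)) b‖ := by
  have hIa := integrableOn_rpow_mul_of_mellinConvergent hf ha
  have hIb := integrableOn_rpow_mul_of_mellinConvergent hf hb
  rw [← integral_rpow_mul_eq_norm_mellin hf, ← integral_rpow_mul_eq_norm_mellin hf,
    ← integral_add hIa hIb]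
  refine norm_integral_le_of_norm_le (hIa.add hIb) ?_
  filter_upwards [self_mem_ae_restrict measurableSet_Ioi] with x (hx : 0 < x)
  rw [norm_smul, norm_cpow_eq_rpow_re_of_pos hx, Complex.norm_of_nonneg (hf x), ← add_mul]
  refine mul_le_mul_of_nonneg_right ?_ (hf x)
  rcases le_total 1 x with h1 | h1
  · exact (rpow_le_rpow_of_exponent_le h1 (by simpa using hsb)).trans
      (le_add_of_nonneg_left (rpow_nonneg hx.le _))
  · exact (rpow_le_rpow_of_exponent_ge hx h1 (by simpa using has)).trans
      (le_add_of_nonneg_right (rpow_nonneg hx.le _))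

lemma norm_Gamma_sub_GammaSeq_le {n : ℕ} (hn : n ≠ 0) {s : ℂ} {a b : ℝ} (ha : 0 < a)
    (has : a ≤ s.re) (hsb : s.re ≤ b) :
    ‖Complex.Gamma s - s.GammaSeq n‖ ≤ ‖Complex.Gamma a - (a : ℂ).GammaSeq n‖ +
      ‖Complex.Gamma b - (b : ℂ).GammaSeq n‖ := by
  have hs := hasMellin_gammaSeqErrorKernel hn (ha.trans_le has)
  have hfa := hasMellin_gammaSeqErrorKernel hn (s := a) ha
  have hfb := hasMellin_gammaSeqErrorKernel hn (s := b) (ha.trans_le (has.trans hsb))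
  rw [← hs.2, ← hfa.2, ← hfb.2]
  exact norm_mellin_le_add (gammaSeqErrorKernel_nonneg n) has hsb hfa.1 hfb.1

lemma tendstoLocallyUniformlyOn_GammaSeq :
    TendstoLocallyUniformlyOn (fun (n : ℕ) (s : ℂ) ↦ s.GammaSeq n) Complex.Gamma atTop
      {s | 0 < s.re} := by
  have herr (a : ℝ) : Tendsto (fun n ↦ ‖Complex.Gamma a - (a : ℂ).GammaSeq n‖) atTop (𝓝 0) := by
    simpa using ((Complex.GammaSeq_tendsto_Gamma a).const_sub (Complex.Gamma a)).norm
  refine Metric.tendstoLocallyUniformlyOn_iff.2 fun ε hε z (hz : 0 < z.re) ↦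
    ⟨re ⁻¹' Set.Ioo (z.re / 2) (z.re + 1), mem_nhdsWithin_of_mem_nhds
      (continuous_re.continuousAt.preimage_mem_nhds (Ioo_mem_nhds (by linarith) (by linarith))), ?_⟩
  have hsum := (herr (z.re / 2)).add (herr (z.re + 1))
  rw [add_zero] at hsum
  filter_upwards [hsum.eventually_lt_const hε, eventually_ne_atTop 0] with n hlt hn s hs
  rw [dist_eq_norm]
  exact (norm_Gamma_sub_GammaSeq_le hn (half_pos hz) hs.1.le hs.2.le).trans_lt hlt

lemma add_natCast_ne_zero {s : ℂ} (hs : 0 < s.re) (j : ℕ) : s + j ≠ 0 :=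
  ne_zero_of_re_pos (by rw [add_re, natCast_re]; positivity)

lemma differentiableOn_GammaSeq {n : ℕ} (hn : n ≠ 0) :
    DifferentiableOn ℂ (fun s : ℂ ↦ s.GammaSeq n) {s | 0 < s.re} := by
  unfold Complex.GammaSeq
  refine fun s hs ↦ DifferentiableAt.differentiableWithinAt ?_
  have hn' : (n : ℂ) ≠ 0 := Nat.cast_ne_zero.2 hn
  have hprod : ∏ j ∈ Finset.range (n + 1), (s + j) ≠ 0 :=
    Finset.prod_ne_zero_iff.2 fun j _ ↦ add_natCast_ne_zero hs j
  fun_prop (disch := first | exact Or.inl hn' | exact hprod)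

lemma logDeriv_GammaSeq {n : ℕ} (hn : n ≠ 0) {s : ℂ} (hs : 0 < s.re) :
    logDeriv (fun s : ℂ ↦ s.GammaSeq n) s =
      Real.log n - ∑ j ∈ Finset.range (n + 1), (s + j)⁻¹ := by
  have hn' : (n : ℂ) ≠ 0 := Nat.cast_ne_zero.2 hn
  have hlin (j : ℕ) : logDeriv (fun s : ℂ ↦ s + j) s = (s + j)⁻¹ := by simp [logDeriv_apply]
  have hprod : ∏ j ∈ Finset.range (n + 1), (s + j) ≠ 0 :=
    Finset.prod_ne_zero_iff.2 fun j _ ↦ add_natCast_ne_zero hs j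
  have hpow : logDeriv (fun s : ℂ ↦ (n : ℂ) ^ s * n.factorial) s = Real.log n := by
    have h := (hasStrictDerivAt_const_cpow (Or.inl hn') (y := s)).hasDerivAt.deriv
    rw [logDeriv_mul_const s _ (by exact_mod_cast n.factorial_ne_zero), logDeriv_apply, h,
      mul_div_cancel_left₀ _ (by simp [cpow_eq_zero_iff, hn']), natCast_log]
  unfold Complex.GammaSeq
  rw [logDeriv_div s (by simp [cpow_eq_zero_iff, hn', n.factorial_ne_zero]) hprod
    (by fun_prop (disch := simp [hn'])) (by fun_prop), hpow,
    logDeriv_prod (fun j _ ↦ add_natCast_ne_zero hs j) (fun j _ ↦ by fun_prop)]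
  simp only [hlin]

lemma tendsto_log_sub_sum_inv_digamma {s : ℂ} (hs : 0 < s.re) :
    Tendsto (fun n : ℕ ↦ (Real.log n : ℂ) - ∑ j ∈ Finset.range (n + 1), (s + j)⁻¹)
      atTop (𝓝 (digamma s)) := by
  have hopen : IsOpen {s : ℂ | 0 < s.re} := isOpen_lt continuous_const continuous_re
  have h := logDeriv_tendsto hopen hs tendstoLocallyUniformlyOn_GammaSeq
    ((eventually_ne_atTop 0).mono fun n hn ↦ differentiableOn_GammaSeq hn)
    (Complex.Gamma_ne_zero_of_re_pos hs)
  refine h.congr' ?_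
  filter_upwards [eventually_ne_atTop 0] with n hn using logDeriv_GammaSeq hn hs

end Digamma

section DigammaBounds

open Filter Topology

lemma tendsto_log_sub_sum_re_digamma {s : ℂ} (hs : 0 < s.re) :
    Tendsto (fun n : ℕ ↦ Real.log n -
      ∑ j ∈ Finset.range (n + 1), (s.re + j) / ((s.re + j) ^ 2 + s.im ^ 2))
      atTop (𝓝 (digamma s).re) := by
  refine ((continuous_re.tendsto _).comp (tendsto_log_sub_sum_inv_digamma hs)).congr fun n ↦ ?_
  simp only [Function.comp_apply, sub_re, ofReal_re, re_sum, inv_re, normSq_apply, add_re,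
    natCast_re, add_im, natCast_im, add_zero, pow_two]

lemma div_le_half_log_add_div_sub {u A : ℝ} (hu : 0 ≤ u) (huA : u < A) :
    u / A ≤ 1 / 2 * Real.log ((A + u) / (A - u)) := by
  have hA : 0 < A := hu.trans_lt huA
  have h := sum_range_le_log_div (div_nonneg hu hA.le) ((div_lt_one hA).2 huA) 1
  have heq : (1 + u / A) / (1 - u / A) = (A + u) / (A - u) := by field_simp
  simpa [heq] using h

lemma half_log_add_div_sub_le {u A : ℝ} (hu : 0 ≤ u) (huA : u < A) :
    1 / 2 * Real.log ((A + u) / (A - u)) ≤ u * A / (A ^ 2 - u ^ 2) := by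
  have hA : 0 < A := hu.trans_lt huA
  have h := log_div_le_sum_range_add (div_nonneg hu hA.le) ((div_lt_one hA).2 huA) 0
  have heq : (1 + u / A) / (1 - u / A) = (A + u) / (A - u) := by field_simp
  have heq' : u / A / (1 - (u / A) ^ 2) = u * A / (A ^ 2 - u ^ 2) := by field_simp
  simpa [heq, heq'] using h

/-- The function `½ log ((u - ½)² + c)`. Its unit-step differences bracket `u / (u² + b)`: from
above for `c = b - 1/4` and from below for `c = b + 3/4`. -/
noncomputable def halfLogSq (c u : ℝ) : ℝ := 1 / 2 * Real.log ((u - 1 / 2) ^ 2 + c)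

lemma halfLogSq_add_one_sub {c u : ℝ} (h₁ : (u + 1 / 2) ^ 2 + c ≠ 0)
    (h₂ : (u - 1 / 2) ^ 2 + c ≠ 0) :
    halfLogSq c (u + 1) - halfLogSq c u =
      1 / 2 * Real.log ((u ^ 2 + c + 1 / 4 + u) / (u ^ 2 + c + 1 / 4 - u)) := by
  rw [halfLogSq, halfLogSq, ← mul_sub, ← Real.log_div (by convert! h₁ using 3; ring) h₂]
  ring_nf

lemma div_sq_add_le_halfLogSq_sub {u b : ℝ} (hu : 0 ≤ u) (hb : 1 / 4 < b) :
    u / (u ^ 2 + b) ≤ halfLogSq (b - 1 / 4) (u + 1) - halfLogSq (b - 1 / 4) u := by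
  have hb' : 0 < b - 1 / 4 := sub_pos.2 hb
  rw [halfLogSq_add_one_sub (by positivity) (by positivity)]
  convert! div_le_half_log_add_div_sub (A := u ^ 2 + b) hu
    (by nlinarith [sq_nonneg (u - 1 / 2)]) using 5 <;> ring

lemma halfLogSq_sub_le_div_sq_add {u b : ℝ} (hu : 0 < u) (hb : 0 ≤ b) :
    halfLogSq (b + 3 / 4) (u + 1) - halfLogSq (b + 3 / 4) u ≤ u / (u ^ 2 + b) := by
  have huA : u < u ^ 2 + b + 1 := by nlinarith [sq_nonneg (u - 1 / 2)]
  rw [halfLogSq_add_one_sub (by positivity) (by positivity)]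
  calc 1 / 2 * Real.log ((u ^ 2 + (b + 3 / 4) + 1 / 4 + u) / (u ^ 2 + (b + 3 / 4) + 1 / 4 - u))
      = 1 / 2 * Real.log ((u ^ 2 + b + 1 + u) / (u ^ 2 + b + 1 - u)) := by ring_nf
    _ ≤ u * (u ^ 2 + b + 1) / ((u ^ 2 + b + 1) ^ 2 - u ^ 2) := half_log_add_div_sub_le hu.le huA
    _ ≤ u / (u ^ 2 + b) := by
      rw [div_le_div_iff₀ (by nlinarith) (by positivity)]
      nlinarith [mul_nonneg hu.le hb]

lemma tendsto_log_sub_halfLogSq {x c : ℝ} :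
    Tendsto (fun n : ℕ ↦ Real.log n - halfLogSq c (x + (n + 1 : ℕ))) atTop (𝓝 0) := by
  have hinv := tendsto_inv_atTop_nhds_zero_nat (𝕜 := ℝ)
  have hratio : Tendsto (fun n : ℕ ↦ (1 + (x + 1 / 2) * (n : ℝ)⁻¹) ^ 2 + c * (n : ℝ)⁻¹ ^ 2) atTop
      (𝓝 1) := by
    simpa using (((hinv.const_mul (x + 1 / 2)).const_add 1).pow 2).add ((hinv.pow 2).const_mul c)
  have hlog : Tendsto (fun n : ℕ ↦ -(1 / 2 * Real.log
      ((1 + (x + 1 / 2) * (n : ℝ)⁻¹) ^ 2 + c * (n : ℝ)⁻¹ ^ 2))) atTop (𝓝 0) := by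
    simpa only [Real.log_one, mul_zero, neg_zero]
      using ((hratio.log one_ne_zero).const_mul (1 / 2)).neg
  refine hlog.congr' ?_
  filter_upwards [hratio.eventually_ne one_ne_zero, eventually_ne_atTop 0] with n hne hn
  have hn' : (n : ℝ) ≠ 0 := Nat.cast_ne_zero.2 hn
  have heq : (x + (n + 1 : ℕ) - 1 / 2) ^ 2 + c =
      (n : ℝ) ^ 2 * ((1 + (x + 1 / 2) * (n : ℝ)⁻¹) ^ 2 + c * (n : ℝ)⁻¹ ^ 2) := by
    push_cast; field_simp; ring
  rw [halfLogSq, heq, Real.log_mul (pow_ne_zero 2 hn') hne, Real.log_pow]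
  push_cast; ring

lemma sum_halfLogSq_sub (c x : ℝ) (n : ℕ) :
    ∑ j ∈ Finset.range n, (halfLogSq c (x + j + 1) - halfLogSq c (x + j)) =
      halfLogSq c (x + n) - halfLogSq c x := by
  simpa [add_assoc] using Finset.sum_range_sub (fun j : ℕ ↦ halfLogSq c (x + j)) n

lemma re_digamma_le {s : ℂ} (hs : 0 < s.re) :
    (digamma s).re ≤ halfLogSq (s.im ^ 2 + 3 / 4) s.re := by
  have hlim := (tendsto_log_sub_halfLogSq (x := s.re) (c := s.im ^ 2 + 3 / 4)).add_const
    (halfLogSq (s.im ^ 2 + 3 / 4) s.re)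
  rw [zero_add] at hlim
  refine le_of_tendsto_of_tendsto' (tendsto_log_sub_sum_re_digamma hs) hlim fun n ↦ ?_
  have hsum := Finset.sum_le_sum fun j (_ : j ∈ Finset.range (n + 1)) ↦
    halfLogSq_sub_le_div_sq_add (u := s.re + j) (by positivity) (sq_nonneg s.im)
  rw [sum_halfLogSq_sub] at hsum
  linarith

lemma le_re_digamma {s : ℂ} (hs : 0 < s.re) (him : 1 / 4 < s.im ^ 2) :
    halfLogSq (s.im ^ 2 - 1 / 4) s.re ≤ (digamma s).re := by
  have hlim := (tendsto_log_sub_halfLogSq (x := s.re) (c := s.im ^ 2 - 1 / 4)).add_const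
    (halfLogSq (s.im ^ 2 - 1 / 4) s.re)
  rw [zero_add] at hlim
  refine le_of_tendsto_of_tendsto' hlim (tendsto_log_sub_sum_re_digamma hs) fun n ↦ ?_
  have hsum := Finset.sum_le_sum fun j (_ : j ∈ Finset.range (n + 1)) ↦
    div_sq_add_le_halfLogSq_sub (u := s.re + j) (by positivity) him
  rw [sum_halfLogSq_sub] at hsum
  linarith

lemma sq_im_mem_Icc_of_re_digamma_eq {s : ℂ} {r : ℝ} (hre : s.re = 1 / 4) (hr : 2 ≤ r)
    (h : (digamma s).re = Real.log r) :
    s.im ^ 2 ∈ Set.Icc (r ^ 2 - 13 / 16) (r ^ 2 + 3 / 16) := by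
  have hs : 0 < s.re := by norm_num [hre]
  have hlog : Real.log r = 1 / 2 * Real.log (r ^ 2) := by rw [Real.log_pow]; push_cast; ring
  have hr0 : 0 < r ^ 2 := by positivity
  have hlow : r ^ 2 - 13 / 16 ≤ s.im ^ 2 := by
    have hle := re_digamma_le hs
    rw [h, hlog, halfLogSq, hre, mul_le_mul_iff_right₀ (by norm_num),
      Real.log_le_log_iff hr0 (by positivity)] at hle
    linarith
  refine ⟨hlow, ?_⟩
  have him : 1 / 4 < s.im ^ 2 := by nlinarith
  have hle := le_re_digamma hs him
  have hpos : 0 < (1 / 4 - 1 / 2 : ℝ) ^ 2 + (s.im ^ 2 - 1 / 4) := by linarith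
  rw [h, hlog, halfLogSq, hre, mul_le_mul_iff_right₀ (by norm_num),
    Real.log_le_log_iff hpos hr0] at hle
  linarith

end DigammaBounds

section CriticalLine

open Filter Topology ComplexConjugate

lemma completedRiemannZeta_eq_Gammaℝ_mul {s : ℂ} (hs : 0 < s.re) :
    completedRiemannZeta s = Gammaℝ s * riemannZeta s := by
  rw [riemannZeta_def_of_ne_zero (ne_zero_of_re_pos hs),
    mul_div_cancel₀ _ (Gammaℝ_ne_zero_of_re_pos hs)]

lemma Gammaℝ_conj (s : ℂ) : Gammaℝ (conj s) = conj (Gammaℝ s) := by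
  have hπ : (π : ℂ).arg ≠ π := by
    rw [arg_ofReal_of_nonneg pi_pos.le]; exact pi_ne_zero.symm
  have hcpow : conj ((π : ℂ) ^ (-s / 2)) = (π : ℂ) ^ conj (-s / 2) := by
    rw [cpow_conj _ _ hπ, conj_ofReal]
  rw [Gammaℝ_def, Gammaℝ_def, map_mul, ← Complex.Gamma_conj, hcpow]
  simp only [map_div₀, map_neg, map_ofNat]

lemma im_completedRiemannZeta_eq_zero {s : ℂ} (hs : s.re = 1 / 2) :
    (completedRiemannZeta s).im = 0 := by
  have hpos : 0 < s.re := by norm_num [hs]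
  have hconj : conj s = 1 - s := by
    apply Complex.ext <;> simp [hs]; norm_num
  rw [← conj_eq_iff_im]
  calc conj (completedRiemannZeta s) = completedRiemannZeta (conj s) := by
        rw [completedRiemannZeta_eq_Gammaℝ_mul hpos,
          completedRiemannZeta_eq_Gammaℝ_mul (by rwa [conj_re]), Gammaℝ_conj, riemannZeta_conj,
          map_mul]
    _ = completedRiemannZeta s := by rw [hconj, completedRiemannZeta_one_sub]

lemma half_add_I_mul_re (t : ℝ) : (1 / 2 + I * t : ℂ).re = 1 / 2 := by simp

lemma half_add_I_mul_ne_one (t : ℝ) : (1 / 2 + I * t : ℂ) ≠ 1 := fun h ↦ by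
  have := congrArg re h
  norm_num at this

lemma hasDerivAt_comp_half_add_I_mul {f : ℂ → ℂ} {t : ℝ}
    (hf : DifferentiableAt ℂ f (1 / 2 + I * t)) :
    HasDerivAt (fun x : ℝ ↦ f (1 / 2 + I * x)) (deriv f (1 / 2 + I * t) * I) t := by
  have hline : HasDerivAt (fun z : ℂ ↦ 1 / 2 + I * z) I (t : ℂ) := by
    simpa using ((hasDerivAt_id (t : ℂ)).const_mul I).const_add (1 / 2)
  exact (hf.hasDerivAt.comp (t : ℂ) hline).comp_ofReal

lemma re_logDeriv_completedRiemannZeta_eq_zero (t : ℝ) :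
    (logDeriv completedRiemannZeta (1 / 2 + I * t)).re = 0 := by
  have hreal (x : ℝ) := im_completedRiemannZeta_eq_zero (half_add_I_mul_re x)
  have hre := half_add_I_mul_re t
  have hderiv := hasDerivAt_comp_half_add_I_mul (t := t) (differentiableAt_completedZeta
    (ne_zero_of_re_pos (by norm_num [hre])) (half_add_I_mul_ne_one t))
  have him : HasDerivAt (fun x : ℝ ↦ (completedRiemannZeta (1 / 2 + I * x)).im)
      (deriv completedRiemannZeta (1 / 2 + I * t) * I).im t :=
    imCLM.hasFDerivAt.comp_hasDerivAt t hderiv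
  have hzero := him.unique ((hasDerivAt_const t (0 : ℝ)).congr_of_eventuallyEq
    (Eventually.of_forall hreal))
  rw [mul_I_im] at hzero
  rw [logDeriv_apply, div_re, hzero, hreal t]
  simp only [zero_mul, mul_zero, zero_div, add_zero]

lemma hasDerivAt_Gammaℝ {s : ℂ} (hs : 0 < s.re) :
    HasDerivAt Gammaℝ (Gammaℝ s * ((digamma (s / 2) - Real.log π) / 2)) s := by
  have hs' : 0 < (s / 2).re := by simpa using hs
  have hπ : (π : ℂ) ≠ 0 := ofReal_ne_zero.2 pi_ne_zero
  have hpow : HasDerivAt (fun s : ℂ ↦ (π : ℂ) ^ (-s / 2))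
      ((π : ℂ) ^ (-s / 2) * Complex.log π * (-1 / 2)) s :=
    ((hasDerivAt_id s).neg.div_const 2).const_cpow (Or.inl hπ)
  have hdiff : DifferentiableAt ℂ Complex.Gamma (s / 2) :=
    differentiableAt_Gamma _ fun m h ↦ (hs'.trans_eq (congrArg re h)).not_ge (by simp)
  have hΓ : HasDerivAt (fun s : ℂ ↦ Complex.Gamma (s / 2)) _ s :=
    hdiff.hasDerivAt.comp s ((hasDerivAt_id s).div_const 2)
  convert! hpow.mul hΓ using 1
  rw [Gammaℝ_def, digamma_def, logDeriv_apply, ofReal_log pi_pos.le]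
  field_simp [Complex.Gamma_ne_zero_of_re_pos hs']
  ring

lemma re_digamma_eq_log_pi_of_deriv_riemannZeta_eq_zero {t : ℝ}
    (hderiv : deriv riemannZeta (1 / 2 + I * t) = 0) (hne : riemannZeta (1 / 2 + I * t) ≠ 0) :
    (digamma ((1 / 2 + I * t) / 2)).re = Real.log π := by
  have hΛ := re_logDeriv_completedRiemannZeta_eq_zero t
  have hpos : 0 < (1 / 2 + I * t : ℂ).re := by norm_num [half_add_I_mul_re t]
  set s : ℂ := 1 / 2 + I * t with hs
  have hΓ := hasDerivAt_Gammaℝ hpos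
  have hΓne := Gammaℝ_ne_zero_of_re_pos hpos
  have hfactor : completedRiemannZeta =ᶠ[𝓝 s] fun s ↦ Gammaℝ s * riemannZeta s := by
    filter_upwards [(isOpen_lt continuous_const continuous_re).mem_nhds hpos] with z hz
      using completedRiemannZeta_eq_Gammaℝ_mul hz
  rw [logDeriv_apply, hfactor.deriv_eq, hfactor.eq_of_nhds, ← logDeriv_apply,
    logDeriv_mul s hΓne hne hΓ.differentiableAt
      (differentiableAt_riemannZeta (half_add_I_mul_ne_one t)),
    logDeriv_apply, logDeriv_apply, hΓ.deriv, hderiv, zero_div, add_zero,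
    mul_div_cancel_left₀ _ hΓne] at hΛ
  simpa [sub_eq_zero] using hΛ

lemma sq_mem_Icc_of_deriv_riemannZeta_eq_zero {t : ℝ}
    (hderiv : deriv riemannZeta (1 / 2 + I * t) = 0) (hne : riemannZeta (1 / 2 + I * t) ≠ 0) :
    t ^ 2 ∈ Set.Icc (4 * π ^ 2 - 13 / 4) (4 * π ^ 2 + 3 / 4) := by
  have h := sq_im_mem_Icc_of_re_digamma_eq (by norm_num) two_le_pi
    (re_digamma_eq_log_pi_of_deriv_riemannZeta_eq_zero hderiv hne)
  have him : ((1 / 2 + I * t : ℂ) / 2).im = t / 2 := by simp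
  rw [him, Set.mem_Icc] at h
  constructor <;> linarith [h.1, h.2]

end CriticalLine

section EulerMaclaurin

open Filter Topology MeasureTheory intervalIntegral

lemma integral_bernoulliFun_mul {a : ℝ} {F F' : ℝ → ℂ}
    (hF : ∀ x ∈ Set.Icc a (a + 1), HasDerivAt F (F' x) x)
    (hF' : ContinuousOn F' (Set.Icc a (a + 1))) (k : ℕ) :
    ∫ x in a..a + 1, (bernoulliFun k (x - a) : ℂ) * F x =
      (bernoulliFun (k + 1) 1 * F (a + 1) - bernoulliFun (k + 1) 0 * F a) / (k + 1) -
        1 / (k + 1) * ∫ x in a..a + 1, (bernoulliFun (k + 1) (x - a) : ℂ) * F' x := by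
  have huIcc : Set.uIcc a (a + 1) = Set.Icc a (a + 1) := Set.uIcc_of_le (by linarith)
  have hB (x : ℝ) : HasDerivAt (fun x : ℝ ↦ ((bernoulliFun (k + 1) (x - a) / (k + 1) : ℝ) : ℂ))
      (bernoulliFun k (x - a)) x :=
    ((antideriv_bernoulliFun k (x - a)).comp_sub_const x a).ofReal_comp
  have hparts := integral_deriv_mul_eq_sub (fun x _ ↦ hB x)
    (fun x hx ↦ hF x (huIcc ▸ hx)) (Continuous.intervalIntegrable (by fun_prop) _ _)
    (hF'.intervalIntegrable_of_Icc (by linarith))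
  rw [intervalIntegral.integral_add] at hparts
  · rw [eq_sub_iff_add_eq, ← intervalIntegral.integral_const_mul]
    convert! hparts using 1
    · congr 2 with x
      push_cast
      ring
    · push_cast
      rw [add_sub_cancel_left, sub_self]
      ring
  · exact (ContinuousOn.mul (by fun_prop) fun x hx ↦
      (hF x hx).continuousAt.continuousWithinAt).intervalIntegrable_of_Icc (by linarith)
  · exact (ContinuousOn.mul (by fun_prop) hF').intervalIntegrable_of_Icc (by linarith)

lemma integral_unit_eq_euler_maclaurin {a : ℝ} {F : ℕ → ℝ → ℂ}
    (hF : ∀ k, ∀ x ∈ Set.Icc a (a + 1), HasDerivAt (F k) (F (k + 1) x) x) (m : ℕ) :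
    ∫ x in a..a + 1, F 0 x = (F 0 a + F 0 (a + 1)) / 2 +
      ∑ k ∈ Finset.range m, (-1) ^ (k + 1) * (bernoulli (k + 2) : ℂ) / (k + 2).factorial *
        (F (k + 1) (a + 1) - F (k + 1) a) +
      (-1) ^ (m + 1) / (m + 1).factorial *
        ∫ x in a..a + 1, (bernoulliFun (m + 1) (x - a) : ℂ) * F (m + 1) x := by
  have hcont (k : ℕ) : ContinuousOn (F k) (Set.Icc a (a + 1)) :=
    fun x hx ↦ (hF k x hx).continuousAt.continuousWithinAt
  induction m with
  | zero =>
    have h := integral_bernoulliFun_mul (hF 0) (hcont 1) 0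
    simp only [bernoulliFun_zero, ofReal_one, one_mul] at h
    rw [h]
    norm_num
    ring
  | succ m ih =>
    rw [ih, integral_bernoulliFun_mul (hF (m + 1)) (hcont (m + 2)) (m + 1),
      bernoulliFun_endpoints_eq_of_ne_one (by omega), bernoulliFun_eval_zero,
      Finset.sum_range_succ, Nat.factorial_succ (m + 1)]
    have hfac : ((m + 1).factorial : ℂ) ≠ 0 := by exact_mod_cast (m + 1).factorial_ne_zero
    have hm : (m : ℂ) + 1 + 1 ≠ 0 := by exact_mod_cast (m + 1).succ_ne_zero
    push_cast
    field_simp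
    ring

lemma eqOn_comp_fract {E : Type*} (φ : ℝ → ℝ → E) (n : ℕ) :
    Set.EqOn (fun x ↦ φ (x - n) x) (fun x ↦ φ (Int.fract x) x) (Set.Ioo n (n + 1)) := by
  intro x hx
  have hfloor : ⌊x⌋ = (n : ℤ) := Int.floor_eq_iff.2 ⟨by exact_mod_cast hx.1.le, by
    exact_mod_cast hx.2⟩
  simp only [Int.fract, hfloor, Int.cast_natCast]

lemma sum_Ico_eq_euler_maclaurin {N M : ℕ} (hNM : N ≤ M) {F : ℕ → ℝ → ℂ}
    (hF : ∀ k, ∀ x ∈ Set.Icc (N : ℝ) M, HasDerivAt (F k) (F (k + 1) x) x) (m : ℕ) :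
    ∑ n ∈ Finset.Ico N M, F 0 n = (∫ x in (N : ℝ)..M, F 0 x) + (F 0 N - F 0 M) / 2 -
      ∑ k ∈ Finset.range m, (-1) ^ (k + 1) * (bernoulli (k + 2) : ℂ) / (k + 2).factorial *
        (F (k + 1) M - F (k + 1) N) -
      (-1) ^ (m + 1) / (m + 1).factorial *
        ∫ x in (N : ℝ)..M, (bernoulliFun (m + 1) (Int.fract x) : ℂ) * F (m + 1) x := by
  have hsub (n : ℕ) (hn : n ∈ Set.Ico N M) : Set.Icc (n : ℝ) (n + 1) ⊆ Set.Icc (N : ℝ) M :=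
    Set.Icc_subset_Icc (by exact_mod_cast hn.1) (by exact_mod_cast hn.2)
  have hcont (k n : ℕ) (hn : n ∈ Set.Ico N M) : ContinuousOn (F k) (Set.Icc n (n + 1)) :=
    fun x hx ↦ (hF k x (hsub n hn hx)).continuousAt.continuousWithinAt
  have hfract (n : ℕ) := eqOn_comp_fract
    (fun y x ↦ (bernoulliFun (m + 1) y : ℂ) * F (m + 1) x) n
  have hle (n : ℕ) : (n : ℝ) ≤ n + 1 := by linarith
  have hsum := Finset.sum_congr rfl fun n hn ↦ integral_unit_eq_euler_maclaurin
    (fun k x hx ↦ hF k x (hsub n (Finset.mem_Ico.1 hn) hx)) m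
  have htel (f : ℝ → ℂ) : ∑ n ∈ Finset.Ico N M, (f (n + 1) - f n) = f M - f N := by
    exact_mod_cast Finset.sum_Ico_sub (fun n : ℕ ↦ f n) hNM
  have hint0 := sum_integral_adjacent_intervals_Ico (f := F 0) (μ := volume)
    (a := fun n : ℕ ↦ (n : ℝ)) hNM fun n hn ↦ by
      push_cast
      exact (hcont 0 n hn).intervalIntegrable_of_Icc (hle n)
  have hintB := sum_integral_adjacent_intervals_Ico
    (f := fun x ↦ (bernoulliFun (m + 1) (Int.fract x) : ℂ) * F (m + 1) x) (μ := volume)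
    (a := fun n : ℕ ↦ (n : ℝ)) hNM fun n hn ↦ by
      push_cast
      refine IntervalIntegrable.congr_uIoo (f := fun x ↦ (bernoulliFun (m + 1) (x - n) : ℂ) *
        F (m + 1) x) ?_ (by rw [Set.uIoo_of_le (hle n)]; exact hfract n)
      exact (ContinuousOn.mul (by fun_prop) (hcont (m + 1) n hn)).intervalIntegrable_of_Icc (hle n)
  simp only [integral_congr_Ioo_of_le (hle _) (hfract _)] at hsum
  push_cast at hint0 hintB
  simp only [Finset.sum_add_distrib, ← Finset.mul_sum, hint0, hintB, ← Finset.sum_div] at hsum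
  rw [Finset.sum_comm] at hsum
  simp only [← Finset.mul_sum, htel] at hsum
  have htel0 := htel (F 0)
  rw [Finset.sum_sub_distrib] at htel0
  linear_combination -hsum - htel0 / 2

lemma tendsto_sum_Ico_euler_maclaurin {N : ℕ} {F : ℕ → ℝ → ℂ} {m : ℕ}
    (hF : ∀ k, ∀ x ∈ Set.Ici (N : ℝ), HasDerivAt (F k) (F (k + 1) x) x)
    (hlim : ∀ k, Tendsto (F k) atTop (𝓝 0)) (hint : IntegrableOn (F 0) (Set.Ioi N))
    (hintB : IntegrableOn (fun x ↦ (bernoulliFun (m + 1) (Int.fract x) : ℂ) * F (m + 1) x)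
      (Set.Ioi N)) :
    Tendsto (fun M ↦ ∑ n ∈ Finset.Ico N M, F 0 n) atTop
      (𝓝 ((∫ x in Set.Ioi (N : ℝ), F 0 x) + F 0 N / 2 +
        ∑ k ∈ Finset.range m, (-1) ^ (k + 1) * (bernoulli (k + 2) : ℂ) / (k + 2).factorial *
          F (k + 1) N -
        (-1) ^ (m + 1) / (m + 1).factorial * ∫ x in Set.Ioi (N : ℝ),
          (bernoulliFun (m + 1) (Int.fract x) : ℂ) * F (m + 1) x)) := by
  have hlimNat (k : ℕ) : Tendsto (fun M : ℕ ↦ F k M) atTop (𝓝 0) :=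
    (hlim k).comp tendsto_natCast_atTop_atTop
  have h := (((intervalIntegral_tendsto_integral_Ioi _ hint tendsto_natCast_atTop_atTop).add
    (((hlimNat 0).const_sub (F 0 N)).div_const 2)).sub
    (tendsto_finsetSum (Finset.range m) fun k _ ↦ ((hlimNat (k + 1)).sub_const
      (F (k + 1) N)).const_mul ((-1 : ℂ) ^ (k + 1) * (bernoulli (k + 2) : ℂ) /
        (k + 2).factorial))).sub
    ((intervalIntegral_tendsto_integral_Ioi _ hintB tendsto_natCast_atTop_atTop).const_mul
      ((-1 : ℂ) ^ (m + 1) / (m + 1).factorial))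
  simp only [sub_zero, zero_sub, mul_neg, Finset.sum_neg_distrib, sub_neg_eq_add] at h
  refine h.congr' ?_
  filter_upwards [eventually_ge_atTop N] with M hM
  exact (sum_Ico_eq_euler_maclaurin hM (fun k x hx ↦ hF k x hx.1) m).symm

end EulerMaclaurin

section BoundedMellin

open Filter Topology MeasureTheory

variable {f : ℝ → ℂ} {a C : ℝ} {z : ℂ}

lemma mellinConvergent_and_hasDerivAt_of_bounded (hf : Measurable f) (hC : ∀ x, ‖f x‖ ≤ C)
    (ha : 0 < a) (hfa : ∀ x ≤ a, f x = 0) (hz : z.re < 0) :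
    MellinConvergent f z ∧
      HasDerivAt (mellin f) (mellin (fun x ↦ Real.log x • f x) z) z := by
  have hloc : LocallyIntegrableOn f (Set.Ioi 0) :=
    ((locallyIntegrable_const C).mono hf.aestronglyMeasurable (.of_forall fun x ↦
      (hC x).trans (le_abs_self C))).locallyIntegrableOn _
  have htop : f =O[atTop] fun x : ℝ ↦ x ^ (-(0 : ℝ)) :=
    .of_bound C (.of_forall fun x ↦ by simpa using hC x)
  have hbot : f =O[𝓝[>] 0] fun x : ℝ ↦ x ^ (-(z.re - 1)) :=
    .of_bound 1 <| by
      filter_upwards [Ioo_mem_nhdsGT ha] with x hx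
      simp only [hfa x hx.2.le, norm_zero, one_mul, norm_nonneg]
  exact ⟨mellinConvergent_of_isBigO_rpow hloc htop hz hbot (by linarith),
    (mellin_hasDerivAt_of_isBigO_rpow hloc htop hz hbot (by linarith)).2⟩

lemma mellin_eq_setIntegral_Ioi (ha : 0 ≤ a) (hfa : ∀ x ≤ a, f x = 0) :
    mellin f z = ∫ x in Set.Ioi a, (x : ℂ) ^ (z - 1) * f x :=
  setIntegral_eq_of_subset_of_forall_sdiff_eq_zero measurableSet_Ioi (Set.Ioi_subset_Ioi ha)
    fun x hx ↦ by rw [hfa x (not_lt.1 hx.2), smul_zero]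

lemma norm_mellin_le_of_bounded (hC : ∀ x, ‖f x‖ ≤ C) (ha : 0 < a) (hfa : ∀ x ≤ a, f x = 0)
    (hz : z.re < 0) : ‖mellin f z‖ ≤ C * (a ^ z.re / (-z.re)) := by
  have hz' : z.re - 1 < -1 := by linarith
  have hbound : ∀ x ∈ Set.Ioi a, ‖(x : ℂ) ^ (z - 1) * f x‖ ≤ C * x ^ (z.re - 1) := by
    intro x hx
    rw [norm_mul, norm_cpow_eq_rpow_re_of_pos (ha.trans hx), mul_comm, sub_re, one_re]
    have := Real.rpow_nonneg (ha.trans hx).le (z.re - 1)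
    gcongr
    exact hC x
  calc ‖mellin f z‖ ≤ ∫ x in Set.Ioi a, C * x ^ (z.re - 1) := by
        rw [mellin_eq_setIntegral_Ioi ha.le hfa]
        exact norm_integral_le_of_norm_le ((integrableOn_Ioi_rpow_of_lt hz' ha).const_mul C)
          (ae_restrict_of_forall_mem measurableSet_Ioi hbound)
    _ = C * (a ^ z.re / (-z.re)) := by
        rw [integral_const_mul, integral_Ioi_rpow_of_lt hz' ha, sub_add_cancel, neg_div, div_neg]

-- The concavity bound `log x ≤ log a - 1 + x / a` replaces the logarithm by powers.
lemma norm_cpow_mul_log_smul_le (hC : ∀ x, ‖f x‖ ≤ C) (ha : 1 ≤ a) {x : ℝ} (hx : a < x) :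
    ‖(x : ℂ) ^ (z - 1) * Real.log x • f x‖ ≤
      C * ((Real.log a - 1) * x ^ (z.re - 1) + 1 / a * x ^ z.re) := by
  have ha0 : 0 < a := by linarith
  have hx0 : 0 < x := ha0.trans hx
  have hlog0 : 0 ≤ Real.log x := Real.log_nonneg (ha.trans hx.le)
  have hlog : Real.log x ≤ Real.log a - 1 + 1 / a * x := by
    have := Real.log_le_sub_one_of_pos (div_pos hx0 ha0)
    rw [Real.log_div hx0.ne' ha0.ne'] at this
    rw [one_div_mul_eq_div]
    linarith
  calc ‖(x : ℂ) ^ (z - 1) * Real.log x • f x‖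
      = x ^ (z.re - 1) * Real.log x * ‖f x‖ := by
        rw [norm_mul, norm_smul, norm_cpow_eq_rpow_re_of_pos hx0, sub_re, one_re,
          Real.norm_of_nonneg hlog0, mul_assoc]
    _ ≤ x ^ (z.re - 1) * (Real.log a - 1 + 1 / a * x) * C :=
        mul_le_mul (mul_le_mul_of_nonneg_left hlog (Real.rpow_nonneg hx0.le _)) (hC x)
          (norm_nonneg _) (mul_nonneg (Real.rpow_nonneg hx0.le _) (hlog0.trans hlog))
    _ = C * ((Real.log a - 1) * x ^ (z.re - 1) + 1 / a * x ^ z.re) := by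
        rw [Real.rpow_sub_one hx0.ne']
        field_simp

lemma norm_mellin_log_le_of_bounded (hC : ∀ x, ‖f x‖ ≤ C) (ha : 1 ≤ a) (hfa : ∀ x ≤ a, f x = 0)
    (hz : z.re < -1) :
    ‖mellin (fun x ↦ Real.log x • f x) z‖ ≤
      C * (a ^ z.re * ((Real.log a - 1) / (-z.re) + 1 / (-z.re - 1))) := by
  have ha0 : 0 < a := by linarith
  have hint₁ := integrableOn_Ioi_rpow_of_lt (show z.re - 1 < -1 by linarith) ha0
  have hint₂ := integrableOn_Ioi_rpow_of_lt hz ha0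
  calc ‖mellin (fun x ↦ Real.log x • f x) z‖
      ≤ ∫ x in Set.Ioi a, C * ((Real.log a - 1) * x ^ (z.re - 1) + 1 / a * x ^ z.re) := by
        rw [mellin_eq_setIntegral_Ioi ha0.le fun x hx ↦ by rw [hfa x hx, smul_zero]]
        exact norm_integral_le_of_norm_le
          (((hint₁.const_mul _).add (hint₂.const_mul _)).const_mul C)
          (ae_restrict_of_forall_mem measurableSet_Ioi
            fun _ ↦ norm_cpow_mul_log_smul_le hC ha)
    _ = C * (a ^ z.re * ((Real.log a - 1) / (-z.re) + 1 / (-z.re - 1))) := by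
        rw [integral_const_mul, integral_add (hint₁.const_mul _) (hint₂.const_mul _),
          integral_const_mul, integral_const_mul, integral_Ioi_rpow_of_lt (by linarith) ha0,
          integral_Ioi_rpow_of_lt hz ha0, sub_add_cancel, Real.rpow_add_one ha0.ne',
          show -z.re - 1 = -(z.re + 1) by ring]
        field_simp

end BoundedMellin

section ZetaEulerMaclaurin

open Filter Topology MeasureTheory

/-- The periodised Bernoulli polynomial `B_m({x})` cut off to `x > N`. Its Mellin transform gives
the remainder in the Euler–Maclaurin formula for `ζ`. -/
noncomputable def bernoulliTail (N m : ℕ) : ℝ → ℂ :=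
  (Set.Ioi (N : ℝ)).indicator fun x ↦ (bernoulliFun m (Int.fract x) : ℂ)

lemma bernoulliTail_of_le {N m : ℕ} {x : ℝ} (hx : x ≤ N) : bernoulliTail N m x = 0 :=
  Set.indicator_of_notMem (by simpa using hx) _

lemma measurable_bernoulliTail (N m : ℕ) : Measurable (bernoulliTail N m) :=
  (measurable_ofReal.comp ((continuous_bernoulliFun m).measurable.comp measurable_fract)).indicator
    measurableSet_Ioi

lemma norm_bernoulliTail_le {m : ℕ} {C : ℝ} (N : ℕ)
    (hC : ∀ x ∈ Set.Icc (0 : ℝ) 1, |bernoulliFun m x| ≤ C) (x : ℝ) :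
    ‖bernoulliTail N m x‖ ≤ C := by
  refine (norm_indicator_le_norm_self _ x).trans ?_
  rw [norm_real]
  exact hC _ ⟨Int.fract_nonneg x, (Int.fract_lt_one x).le⟩

lemma exists_abs_bernoulliFun_le (m : ℕ) :
    ∃ C, ∀ x ∈ Set.Icc (0 : ℝ) 1, |bernoulliFun m x| ≤ C :=
  isCompact_Icc.exists_bound_of_continuousOn (continuous_bernoulliFun m).continuousOn

lemma mellinConvergent_and_hasDerivAt_bernoulliTail {N : ℕ} (hN : N ≠ 0) (m : ℕ) {z : ℂ}
    (hz : z.re < 0) :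
    MellinConvergent (bernoulliTail N m) z ∧ HasDerivAt (mellin (bernoulliTail N m))
      (mellin (fun x ↦ Real.log x • bernoulliTail N m x) z) z := by
  obtain ⟨C, hC⟩ := exists_abs_bernoulliFun_le m
  exact mellinConvergent_and_hasDerivAt_of_bounded (measurable_bernoulliTail N m)
    (norm_bernoulliTail_le N hC) (by positivity) (fun x ↦ bernoulliTail_of_le) hz

/-- The Euler–Maclaurin expression for `ζ(s)` split at `N`, with `m` correction terms. -/
noncomputable def zetaEulerMaclaurin (N m : ℕ) (s : ℂ) : ℂ :=
  ∑ n ∈ Finset.Ico 1 N, (n : ℂ) ^ (-s) + (N : ℂ) ^ (1 - s) / (s - 1) + (N : ℂ) ^ (-s) / 2 +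
    ∑ k ∈ Finset.range m, (-1) ^ (k + 1) * (bernoulli (k + 2) : ℂ) / (k + 2).factorial *
      ((descPochhammer ℂ (k + 1)).eval (-s) * (N : ℂ) ^ (-s - (k + 1 : ℕ))) -
    (-1) ^ (m + 1) / (m + 1).factorial *
      ((descPochhammer ℂ (m + 1)).eval (-s) * mellin (bernoulliTail N (m + 1)) (-s - m))

lemma hasDerivAt_descPochhammer_mul_cpow (s : ℂ) (k : ℕ) {x : ℝ} (hx : 0 < x) :
    HasDerivAt (fun x : ℝ ↦ (descPochhammer ℂ k).eval s * (x : ℂ) ^ (s - k))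
      ((descPochhammer ℂ (k + 1)).eval s * (x : ℂ) ^ (s - (k + 1 : ℕ))) x := by
  have h := (((hasDerivAt_id (x : ℂ)).cpow_const (c := s - k)
    (ofReal_mem_slitPlane.2 hx)).comp_ofReal).const_mul ((descPochhammer ℂ k).eval s)
  convert! h using 1
  rw [descPochhammer_succ_eval]
  push_cast
  simp only [id]
  ring_nf

lemma tendsto_ofReal_cpow_atTop_zero {s : ℂ} (hs : s.re < 0) :
    Tendsto (fun x : ℝ ↦ (x : ℂ) ^ s) atTop (𝓝 0) := by
  rw [tendsto_zero_iff_norm_tendsto_zero]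
  refine (tendsto_rpow_neg_atTop (neg_pos.2 hs)).congr' ?_
  filter_upwards [eventually_gt_atTop 0] with x hx
  rw [norm_cpow_eq_rpow_re_of_pos hx, neg_neg]

lemma tendsto_sum_Ico_cpow_riemannZeta {s : ℂ} (hs : 1 < s.re) (N : ℕ) (hN : N ≠ 0) :
    Tendsto (fun M ↦ ∑ n ∈ Finset.Ico N M, (n : ℂ) ^ (-s)) atTop
      (𝓝 (riemannZeta s - ∑ n ∈ Finset.Ico 1 N, (n : ℂ) ^ (-s))) := by
  have hzeta : Tendsto (fun M ↦ ∑ n ∈ Finset.range M, (n : ℂ) ^ (-s)) atTop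
      (𝓝 (riemannZeta s)) := by
    simp_rw [cpow_neg, ← one_div, zeta_eq_tsum_one_div_nat_cpow hs]
    exact (summable_one_div_nat_cpow.2 hs).hasSum.tendsto_sum_nat
  refine (hzeta.sub_const _).congr' ?_
  filter_upwards [eventually_ge_atTop N] with M hM
  have hs0 : -s ≠ 0 := neg_ne_zero.2 (ne_zero_of_one_lt_re hs)
  rw [Finset.range_eq_Ico, Finset.sum_eq_sum_Ico_succ_bot (by omega), Nat.cast_zero,
    zero_cpow hs0, zero_add, ← Finset.sum_Ico_consecutive _ (by omega) hM, zero_add,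
    add_sub_cancel_left]

lemma eqOn_cpow_mul_bernoulliTail (N m : ℕ) (s d : ℂ) : Set.EqOn
    (fun x : ℝ ↦ d * ((x : ℂ) ^ (s - m - 1) * bernoulliTail N (m + 1) x))
    (fun x : ℝ ↦ (bernoulliFun (m + 1) (Int.fract x) : ℂ) * (d * (x : ℂ) ^ (s - (m + 1 : ℕ))))
    (Set.Ioi N) := by
  intro x hx
  simp only [bernoulliTail, Set.indicator_of_mem hx, Nat.cast_add_one, sub_sub]
  ring

lemma riemannZeta_eq_zetaEulerMaclaurin_of_one_lt {N : ℕ} (hN : N ≠ 0) (m : ℕ) {s : ℂ}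
    (hs : 1 < s.re) : riemannZeta s = zetaEulerMaclaurin N m s := by
  have hN0 : (0 : ℝ) < N := by positivity
  have hre (k : ℕ) : (-s - k).re < -k := by
    simp only [sub_re, neg_re, natCast_re]
    linarith
  have hkernel := eqOn_cpow_mul_bernoulliTail N m (-s) ((descPochhammer ℂ (m + 1)).eval (-s))
  have hconv : IntegrableOn (fun x : ℝ ↦ (x : ℂ) ^ (-s - m - 1) * bernoulliTail N (m + 1) x)
      (Set.Ioi N) :=
    (mellinConvergent_and_hasDerivAt_bernoulliTail hN (m + 1)
      ((hre m).trans_le (by simp))).1.mono_set (Set.Ioi_subset_Ioi hN0.le)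
  have hmellin := mellin_eq_setIntegral_Ioi (z := -s - m) hN0.le
    fun x ↦ bernoulliTail_of_le (m := m + 1)
  have hlim := tendsto_sum_Ico_euler_maclaurin (m := m)
    (F := fun k x ↦ (descPochhammer ℂ k).eval (-s) * (x : ℂ) ^ (-s - k))
    (fun k x hx ↦ hasDerivAt_descPochhammer_mul_cpow (-s) k (hN0.trans_le hx))
    (fun k ↦ by
      simpa using (tendsto_ofReal_cpow_atTop_zero ((hre k).trans_le (by simp))).const_mul
        ((descPochhammer ℂ k).eval (-s)))
    (by simpa using integrableOn_Ioi_cpow_of_lt (a := -s) (by simpa using hs) hN0)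
    (IntegrableOn.congr_fun (hconv.const_mul _) hkernel measurableSet_Ioi)
  rw [← setIntegral_congr_fun measurableSet_Ioi hkernel, integral_const_mul,
    integral_const_mul, ← hmellin] at hlim
  simp only [descPochhammer_zero, Polynomial.eval_one, one_mul, Nat.cast_zero, sub_zero,
    ofReal_natCast, integral_Ioi_cpow_of_lt (a := -s) (by simpa using hs) hN0] at hlim
  have heq := tendsto_nhds_unique (tendsto_sum_Ico_cpow_riemannZeta hs N hN) hlim
  rw [neg_add_eq_sub, neg_div, ← div_neg, neg_sub] at heq
  rw [zetaEulerMaclaurin]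
  linear_combination heq

lemma isPreconnected_half_plane_sdiff_one {c : ℝ} (hc : c < 1) :
    IsPreconnected ({s : ℂ | c < s.re} \ {1}) := by
  have hunion : {s : ℂ | c < s.re} \ {1} = {s | 1 < s.re} ∪ {s | c < s.re} ∩ {s | 0 < s.im} ∪
      {s | c < s.re} ∩ {s | s.im < 0} ∪ {s | c < s.re} ∩ {s | s.re < 1} := by
    ext ⟨x, y⟩
    have hx := lt_trichotomy x 1
    simp only [Set.mem_sdiff, Set.mem_singleton_iff, Complex.ext_iff, one_re, one_im,
      Set.mem_union, Set.mem_inter_iff, Set.mem_ofPred_eq]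
    constructor <;> intro h <;> grind
  have hleft := convex_halfSpace_re_gt c
  rw [hunion]
  refine IsPreconnected.union ((c + 1) / 2 + I) ?_ ?_ (.union (2 - I) ?_ ?_ (.union (2 + I) ?_ ?_
    (convex_halfSpace_re_gt 1).isPreconnected
    (hleft.inter (convex_halfSpace_im_gt 0)).isPreconnected)
    (hleft.inter (convex_halfSpace_im_lt 0)).isPreconnected)
    (hleft.inter (convex_halfSpace_re_lt 1)).isPreconnected
  all_goals norm_num <;> grind

lemma differentiableAt_zetaEulerMaclaurin {N : ℕ} (hN : N ≠ 0) {m : ℕ} {s : ℂ}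
    (hs : -m < s.re) (hs1 : s ≠ 1) : DifferentiableAt ℂ (zetaEulerMaclaurin N m) s := by
  have hcpow {n : ℕ} (hn : n ≠ 0) {f : ℂ → ℂ} (hf : Differentiable ℂ f) :
      DifferentiableAt ℂ (fun s ↦ (n : ℂ) ^ f s) s :=
    (hf s).const_cpow (.inl (by exact_mod_cast hn))
  have hpoly (k : ℕ) : DifferentiableAt ℂ (fun s ↦ (descPochhammer ℂ k).eval (-s)) s :=
    (descPochhammer ℂ k).differentiableAt.comp s differentiableAt_id.neg
  have hre : (-s - m).re < 0 := by
    rw [sub_re, neg_re, natCast_re]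
    linarith
  have htail : DifferentiableAt ℂ (fun s ↦ mellin (bernoulliTail N (m + 1)) (-s - m)) s :=
    (mellinConvergent_and_hasDerivAt_bernoulliTail hN (m + 1) hre).2.differentiableAt.comp
      (f := fun s : ℂ ↦ -s - m) s (by fun_prop)
  refine .sub (.add (.add (.add (.fun_sum fun n hn ↦ hcpow ?_ (by fun_prop))
    (.div (hcpow hN (by fun_prop)) (by fun_prop) (sub_ne_zero.2 hs1)))
    ((hcpow hN (by fun_prop)).div_const 2)) (.fun_sum fun k _ ↦ .const_mul
      ((hpoly (k + 1)).mul (hcpow hN (by fun_prop))) _)) (((hpoly (m + 1)).mul htail).const_mul _)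
  exact Nat.one_le_iff_ne_zero.1 (Finset.mem_Ico.1 hn).1

theorem riemannZeta_eq_zetaEulerMaclaurin {N : ℕ} (hN : N ≠ 0) {m : ℕ} {s : ℂ}
    (hs : -m < s.re) (hs1 : s ≠ 1) : riemannZeta s = zetaEulerMaclaurin N m s := by
  let U : Set ℂ := {s | -(m : ℝ) < s.re} \ {1}
  have hU : IsOpen U := (isOpen_lt continuous_const continuous_re).sdiff isClosed_singleton
  have hUc : IsPreconnected U :=
    isPreconnected_half_plane_sdiff_one (by linarith [m.cast_nonneg (α := ℝ)])
  have hzeta : AnalyticOnNhd ℂ riemannZeta U := DifferentiableOn.analyticOnNhd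
    (fun s hs ↦ (differentiableAt_riemannZeta hs.2).differentiableWithinAt) hU
  have hexpr : AnalyticOnNhd ℂ (zetaEulerMaclaurin N m) U := DifferentiableOn.analyticOnNhd
    (fun s hs ↦ (differentiableAt_zetaEulerMaclaurin hN hs.1 hs.2).differentiableWithinAt) hU
  have hagree : riemannZeta =ᶠ[𝓝 2] zetaEulerMaclaurin N m := by
    filter_upwards [(isOpen_lt continuous_const continuous_re).mem_nhds
      (show (1 : ℝ) < (2 : ℂ).re by norm_num)] with z hz
    exact riemannZeta_eq_zetaEulerMaclaurin_of_one_lt hN m hz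
  have h2 : (2 : ℂ) ∈ U := ⟨show -(m : ℝ) < (2 : ℂ).re by
    rw [re_ofNat]; linarith [m.cast_nonneg (α := ℝ)], by norm_num⟩
  exact hzeta.eqOn_of_preconnected_of_eventuallyEq hexpr hUc h2 hagree ⟨hs, hs1⟩

end ZetaEulerMaclaurin

section DerivZetaCriticalLine

open Filter Topology

/-- The factor of `2 ^ (-s)` in the Euler–Maclaurin formula for `ζ(s)` split at `2`, with three
correction terms. -/
noncomputable def zetaMainFactor (s : ℂ) : ℂ :=
  1 / 2 + 2 / (s - 1) + s / 24 - s * (s + 1) * (s + 2) / 5760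

/-- The factor of `2 ^ (-s)` in the derivative of `2 ^ (-s) * zetaMainFactor s`. -/
noncomputable def derivZetaMainFactor (s : ℂ) : ℂ :=
  -Real.log 2 * zetaMainFactor s - 2 / (s - 1) ^ 2 + 1 / 24 - (3 * s ^ 2 + 6 * s + 2) / 5760

lemma riemannZeta_eq_one_add_two_cpow_mul {s : ℂ} (hs : -3 < s.re) (hs1 : s ≠ 1) :
    riemannZeta s = 1 + 2 ^ (-s) * zetaMainFactor s -
      s * (s + 1) * (s + 2) * (s + 3) / 24 * mellin (bernoulliTail 2 4) (-s - 3) := by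
  have hB2 : bernoulli (0 + 2) = 1 / 6 := by rw [zero_add, bernoulli_two, one_div]
  have hB3 : bernoulli (1 + 2) = 0 := bernoulli_eq_zero_of_odd (by decide) (by norm_num)
  have hB4 : bernoulli (2 + 2) = -1 / 30 := by
    rw [bernoulli_eq_bernoulli'_of_ne_one (by norm_num), bernoulli'_four]
  have hpow (k : ℕ) : (2 : ℂ) ^ (-s - k) = 2 ^ (-s) / 2 ^ k := by
    rw [cpow_sub _ _ two_ne_zero, cpow_natCast]
  have hpow' : (2 : ℂ) ^ (1 - s) = 2 ^ (-s) * 2 := by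
    rw [sub_eq_neg_add, cpow_add _ _ two_ne_zero, cpow_one]
  rw [riemannZeta_eq_zetaEulerMaclaurin two_ne_zero (m := 3) (by simpa using hs) hs1,
    zetaEulerMaclaurin]
  simp only [Finset.sum_range_succ, Finset.sum_range_zero, Nat.Ico_succ_singleton,
    Finset.sum_singleton, Nat.cast_one, one_cpow, descPochhammer_succ_eval, descPochhammer_zero,
    Polynomial.eval_one, hB2, hB3, hB4, Nat.cast_ofNat, hpow, hpow', zetaMainFactor,
    Nat.factorial]
  push_cast
  ring

lemma hasDerivAt_two_cpow_neg_mul_zetaMainFactor {s : ℂ} (hs1 : s ≠ 1) :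
    HasDerivAt (fun s ↦ 2 ^ (-s) * zetaMainFactor s) (2 ^ (-s) * derivZetaMainFactor s) s := by
  have hid := hasDerivAt_id' s
  have hpow := hid.fun_neg.const_cpow (c := 2) (.inl two_ne_zero)
  have hcubic := (hid.fun_mul (hid.add_const 1)).fun_mul (hid.add_const 2)
  have hfactor : HasDerivAt zetaMainFactor _ s :=
    ((((hasDerivAt_const s 2).div (hid.sub_const 1) (sub_ne_zero.2 hs1)).const_add (1 / 2)).add
      (hid.div_const 24)).sub (hcubic.div_const 5760)
  convert! hpow.fun_mul hfactor using 1
  rw [derivZetaMainFactor, ofReal_log two_pos.le]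
  push_cast
  ring

lemma deriv_riemannZeta_eq_two_cpow_mul {s : ℂ} (hs : -3 < s.re) (hs1 : s ≠ 1) :
    deriv riemannZeta s = 2 ^ (-s) * derivZetaMainFactor s -
      ((4 * s ^ 3 + 18 * s ^ 2 + 22 * s + 6) / 24 * mellin (bernoulliTail 2 4) (-s - 3) -
        s * (s + 1) * (s + 2) * (s + 3) / 24 *
          mellin (fun x ↦ Real.log x • bernoulliTail 2 4 x) (-s - 3)) := by
  have hid := hasDerivAt_id' s
  have hquartic := ((hid.fun_mul (hid.add_const 1)).fun_mul (hid.add_const 2)).fun_mul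
    (hid.add_const 3)
  have hre : (-s - 3).re < 0 := by
    simp only [sub_re, neg_re, re_ofNat]
    linarith
  have htail : HasDerivAt (fun s ↦ mellin (bernoulliTail 2 4) (-s - 3)) _ s :=
    (mellinConvergent_and_hasDerivAt_bernoulliTail two_ne_zero 4 hre).2.comp
      (h := fun s ↦ -s - 3) s (hid.fun_neg.sub_const 3)
  have hformula : riemannZeta =ᶠ[𝓝 s] fun s ↦ 1 + 2 ^ (-s) * zetaMainFactor s -
      s * (s + 1) * (s + 2) * (s + 3) / 24 * mellin (bernoulliTail 2 4) (-s - 3) := by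
    filter_upwards [(isOpen_lt continuous_const continuous_re).mem_nhds hs,
      isOpen_ne.mem_nhds hs1] with z hz hz1 using riemannZeta_eq_one_add_two_cpow_mul hz hz1
  rw [hformula.deriv_eq, (((hasDerivAt_two_cpow_neg_mul_zetaMainFactor hs1).const_add 1).fun_sub
    ((hquartic.div_const 24).fun_mul htail)).deriv]
  ring

lemma abs_bernoulliFun_four_le {x : ℝ} (hx : x ∈ Set.Icc (0 : ℝ) 1) :
    |bernoulliFun 4 x| ≤ 1 / 30 := by
  have heq : bernoulliFun 4 x = (x * (1 - x)) ^ 2 - 1 / 30 := by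
    simp [bernoulliFun, Polynomial.bernoulli_def, Finset.sum_range_succ,
      bernoulli_eq_bernoulli'_of_ne_one]
    norm_num [Nat.choose]
    ring
  have hprod : 0 ≤ x * (1 - x) := mul_nonneg hx.1 (sub_nonneg.2 hx.2)
  have hprod' : x * (1 - x) ≤ 1 / 4 := by nlinarith [sq_nonneg (x - 1 / 2)]
  rw [heq, abs_le]
  constructor <;> nlinarith

lemma two_rpow_neg_seven_halves : (2 : ℝ) ^ (-(7 / 2) : ℝ) = 2 ^ (-(1 / 2) : ℝ) / 8 := by
  rw [show (-(7 / 2) : ℝ) = -(1 / 2) - (3 : ℕ) by norm_num, Real.rpow_sub_natCast two_ne_zero]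
  norm_num

lemma norm_mellin_bernoulliTail_two_four_le {z : ℂ} (hz : z.re = -(7 / 2)) :
    ‖mellin (bernoulliTail 2 4) z‖ ≤ 2 ^ (-(1 / 2) : ℝ) / 840 := by
  have h := norm_mellin_le_of_bounded (z := z) (norm_bernoulliTail_le 2 fun _ ↦
    abs_bernoulliFun_four_le) (by norm_num) (fun _ ↦ bernoulliTail_of_le) (by norm_num [hz])
  rw [hz, Nat.cast_ofNat, two_rpow_neg_seven_halves] at h
  linarith

lemma norm_mellin_log_bernoulliTail_two_four_le {z : ℂ} (hz : z.re = -(7 / 2)) :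
    ‖mellin (fun x ↦ Real.log x • bernoulliTail 2 4 x) z‖ ≤ 2 ^ (-(1 / 2) : ℝ) / 768 := by
  have h := norm_mellin_log_le_of_bounded (z := z) (norm_bernoulliTail_le 2 fun _ ↦
    abs_bernoulliFun_four_le) (by norm_num) (fun _ ↦ bernoulliTail_of_le) (by norm_num [hz])
  rw [hz, Nat.cast_ofNat, two_rpow_neg_seven_halves] at h
  have hlog : (Real.log 2 - 1) / (-(-(7 / 2))) + 1 / (-(-(7 / 2)) - 1) ≤ (5 / 16 : ℝ) := by
    linarith [Real.log_two_lt_d9]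
  have hpow : (0 : ℝ) ≤ 2 ^ (-(1 / 2) : ℝ) / 8 := by positivity
  linarith [mul_le_mul_of_nonneg_left hlog hpow]

lemma re_derivZetaMainFactor_half_add_I_mul (t : ℝ) :
    (derivZetaMainFactor (1 / 2 + I * t)).re =
      -Real.log 2 * (25 / 48 - (1 / 4 + t ^ 2)⁻¹ - (15 / 8 - 9 / 2 * t ^ 2) / 5760) +
        2 * (1 / 4 + t ^ 2)⁻¹ - (1 / 4 + t ^ 2)⁻¹ ^ 2 + 1 / 24 -
          (23 / 4 - 3 * t ^ 2) / 5760 := by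
  set w := (1 / 4 + t ^ 2)⁻¹
  have hwt : w * (1 / 4 + t ^ 2) = 1 := inv_mul_cancel₀ (by positivity)
  have hinv : (1 / 2 + I * t - 1 : ℂ)⁻¹ = (-(1 / 2) - I * t) * w := by
    refine inv_eq_of_mul_eq_one_right ?_
    have hwt' : (w * (1 / 4 + t ^ 2) : ℂ) = 1 := by
      simpa using congrArg ofReal hwt
    linear_combination hwt' - t ^ 2 * w * I_sq
  rw [derivZetaMainFactor, zetaMainFactor, div_eq_mul_inv 2, div_eq_mul_inv 2, ← inv_pow, hinv]
  generalize Real.log 2 = L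
  simp only [one_div, neg_mul, pow_succ, pow_zero, one_mul, sub_re, add_re, neg_re, mul_re,
    ofReal_re, inv_re, re_ofNat, normSq_ofNat, div_self_mul_self', I_re, zero_mul, I_im,
    ofReal_im, mul_zero, sub_self, sub_zero, sub_im, neg_im, inv_im, im_ofNat, neg_zero, zero_div,
    mul_im, zero_add, zero_sub, mul_neg, ne_eq, OfNat.ofNat_ne_zero, not_false_eq_true,
    mul_inv_cancel_left₀, div_ofNat_re, add_zero, one_re, add_im, one_im, div_ofNat_im, neg_neg]
  linear_combination 2 * w * hwt

lemma re_derivZetaMainFactor_le {t : ℝ} (ht : t ^ 2 ∈ Set.Icc (36 : ℝ) (81 / 2)) :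
    (derivZetaMainFactor (1 / 2 + I * t)).re ≤ -(6 / 25) := by
  rw [re_derivZetaMainFactor_half_add_I_mul]
  have hw : (1 / 4 + t ^ 2)⁻¹ ≤ 4 / 145 := by
    rw [inv_le_comm₀ (by positivity) (by norm_num)]
    linarith [ht.1]
  have hlog : 69 / 100 ≤ Real.log 2 := by linarith [Real.log_two_gt_d9]
  have hcoeff : 0 ≤ 25 / 48 - (1 / 4 + t ^ 2)⁻¹ - (15 / 8 - 9 / 2 * t ^ 2) / 5760 := by
    linarith [ht.1]
  nlinarith [mul_le_mul_of_nonneg_right hlog hcoeff, ht.1, ht.2]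

lemma norm_half_add_I_mul_le {t : ℝ} (ht : t ^ 2 ≤ 81 / 2) :
    ‖(1 / 2 + I * t : ℂ)‖ ≤ 32 / 5 ∧ ‖(1 / 2 + I * t + 1 : ℂ)‖ ≤ 33 / 5 ∧
      ‖(1 / 2 + I * t + 2 : ℂ)‖ ≤ 69 / 10 ∧ ‖(1 / 2 + I * t + 3 : ℂ)‖ ≤ 73 / 10 := by
  have hnorm (k : ℝ) {c : ℝ} (hc : 0 ≤ c) (h : (k + 1 / 2) ^ 2 + 81 / 2 ≤ c ^ 2) :
      ‖(1 / 2 + I * t + k : ℂ)‖ ≤ c := by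
    rw [← sq_le_sq₀ (norm_nonneg _) hc, ← normSq_eq_norm_sq]
    refine le_trans (le_of_eq ?_) ((add_le_add_right ht _).trans h)
    simp only [one_div, normSq_apply, add_re, inv_re, re_ofNat, div_self_mul_self',
      mul_re, I_re, ofReal_re, zero_mul, I_im, ofReal_im, mul_zero, sub_self, add_zero, add_im,
      inv_im, im_ofNat, neg_zero, zero_div, mul_im, one_mul, zero_add]
    ring
  exact ⟨by simpa using hnorm 0 (c := 32 / 5) (by norm_num) (by norm_num),
    mod_cast hnorm 1 (by norm_num) (by norm_num), mod_cast hnorm 2 (by norm_num) (by norm_num),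
    mod_cast hnorm 3 (by norm_num) (by norm_num)⟩

lemma norm_quartic_half_add_I_mul_le {t : ℝ} (ht : t ^ 2 ≤ 81 / 2) :
    ‖((1 / 2 + I * t) * (1 / 2 + I * t + 1) * (1 / 2 + I * t + 2) * (1 / 2 + I * t + 3) : ℂ)‖ ≤
      2130 := by
  obtain ⟨h₀, h₁, h₂, h₃⟩ := norm_half_add_I_mul_le ht
  rw [norm_mul, norm_mul, norm_mul]
  calc _ ≤ (32 / 5 * (33 / 5) * (69 / 10) * (73 / 10) : ℝ) := by gcongr
    _ ≤ 2130 := by norm_num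

lemma norm_deriv_quartic_le {s : ℂ} (hs : ‖s‖ ≤ 32 / 5) :
    ‖4 * s ^ 3 + 18 * s ^ 2 + 22 * s + 6‖ ≤ 1935 := by
  calc ‖4 * s ^ 3 + 18 * s ^ 2 + 22 * s + 6‖
      ≤ 4 * ‖s‖ ^ 3 + 18 * ‖s‖ ^ 2 + 22 * ‖s‖ + 6 := by
        refine norm_add₄_le.trans (le_of_eq ?_)
        simp only [norm_mul, norm_pow, Complex.norm_ofNat]
    _ ≤ 4 * (32 / 5) ^ 3 + 18 * (32 / 5) ^ 2 + 22 * (32 / 5) + 6 := by gcongr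
    _ ≤ 1935 := by norm_num

lemma deriv_riemannZeta_ne_zero {t : ℝ} (ht : t ^ 2 ∈ Set.Icc (36 : ℝ) (81 / 2)) :
    deriv riemannZeta (1 / 2 + I * t) ≠ 0 := by
  intro hzero
  have hmain := re_derivZetaMainFactor_le ht
  have hcubic := norm_deriv_quartic_le (norm_half_add_I_mul_le ht.2).1
  have hquartic := norm_quartic_half_add_I_mul_le ht.2
  have hre := half_add_I_mul_re t
  have hformula := deriv_riemannZeta_eq_two_cpow_mul (by norm_num [hre])
    (half_add_I_mul_ne_one t)
  set s : ℂ := 1 / 2 + I * t with hs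
  set q : ℝ := 2 ^ (-(1 / 2) : ℝ) with hq
  have hq0 : 0 < q := by positivity
  have hre' : (-s - 3).re = -(7 / 2) := by norm_num [hre]
  have hpow : ‖(2 : ℂ) ^ (-s)‖ = q := by
    simpa [hre, hq] using norm_natCast_cpow_of_pos two_pos (-s)
  rw [hzero, eq_comm, sub_eq_zero] at hformula
  have hlower : q * (6 / 25) ≤ ‖2 ^ (-s) * derivZetaMainFactor s‖ := by
    rw [norm_mul, hpow]
    gcongr
    exact (le_neg.2 hmain).trans ((neg_le_abs _).trans (abs_re_le_norm _))
  have hupper : ‖2 ^ (-s) * derivZetaMainFactor s‖ ≤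
      1935 / 24 * (q / 840) + 2130 / 24 * (q / 768) := by
    rw [hformula]
    refine (norm_sub_le _ _).trans ?_
    rw [norm_mul, norm_mul, norm_div, norm_div, Complex.norm_ofNat]
    gcongr
    · exact norm_mellin_bernoulliTail_two_four_le hre'
    · exact norm_mellin_log_bernoulliTail_two_four_le hre'
  linarith

theorem riemannZeta_eq_zero_of_deriv_eq_zero {t : ℝ}
    (hderiv : deriv riemannZeta (1 / 2 + I * t) = 0) : riemannZeta (1 / 2 + I * t) = 0 := by
  by_contra hne
  have hwindow := sq_mem_Icc_of_deriv_riemannZeta_eq_zero hderiv hne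
  have hlow := Real.pi_gt_d4
  have hhigh := Real.pi_lt_d4
  refine deriv_riemannZeta_ne_zero ⟨?_, ?_⟩ hderiv
  · nlinarith [hwindow.1]
  · nlinarith [hwindow.2]

end DerivZetaCriticalLine

section KappaDerivative

open Filter Topology ComplexConjugate

lemma pi_mul_deriv_eq_neg_im_div {κ : ℝ → ℝ} {W : ℝ → ℂ} {κ' t : ℝ} {W' : ℂ}
    (hκ : HasDerivAt κ κ' t) (hW : HasDerivAt W W' t) (hne : W t ≠ 0)
    (hconj : ∀ᶠ x in 𝓝 t, exp (2 * π * I * (κ x : ℂ)) * W x = conj (W x)) :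
    π * κ' = -(W' / W t).im := by
  have hne' : conj (W t) ≠ 0 := (map_ne_zero _).2 hne
  have hphase : exp (2 * π * I * (κ t : ℂ)) * W t = conj (W t) := hconj.self_of_nhds
  have hproduct := ((hκ.ofReal_comp.const_mul (2 * π * I)).cexp).fun_mul hW
  have hderiv : exp (2 * π * I * (κ t : ℂ)) * (2 * π * I * κ') * W t +
      exp (2 * π * I * (κ t : ℂ)) * W' = conj W' :=
    hproduct.unique ((conjCLE.hasFDerivAt.comp_hasDerivAt t hW).congr_of_eventuallyEq hconj)
  have hlog : 2 * π * I * κ' = conj (W' / W t) - W' / W t := by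
    rw [map_div₀, eq_sub_iff_add_eq, eq_div_iff hne']
    have hquot : W' / W t * W t = W' := div_mul_cancel₀ _ hne
    linear_combination hderiv + exp (2 * π * I * (κ t : ℂ)) * hquot -
      (2 * π * I * κ' + W' / W t) * hphase
  have him := congrArg im hlog
  simp only [mul_im, mul_re, sub_im, conj_im, ofReal_im, ofReal_re, I_im, I_re, re_ofNat,
    im_ofNat] at him
  linarith

lemma deriv_riemannZeta_mul_I_eq {Z ϑ : ℝ → ℝ} {Z' ϑ' t : ℝ}
    (hRS : ∀ x : ℝ, riemannZeta (1 / 2 + I * x) = Z x * exp (-I * ϑ x))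
    (hZ : HasDerivAt Z Z' t) (hϑ : HasDerivAt ϑ ϑ' t) :
    deriv riemannZeta (1 / 2 + I * t) * I = (Z' - ϑ' * Z t * I) * exp (-I * ϑ t) := by
  have hline := hasDerivAt_comp_half_add_I_mul
    (differentiableAt_riemannZeta (half_add_I_mul_ne_one t))
  simp only [hRS] at hline
  rw [hline.unique (hZ.ofReal_comp.fun_mul (hϑ.ofReal_comp.const_mul (-I)).cexp)]
  ring

lemma deriv_riemannZeta_eq_zero_iff {Z ϑ : ℝ → ℝ} {Z' ϑ' t : ℝ}
    (hRS : ∀ x : ℝ, riemannZeta (1 / 2 + I * x) = Z x * exp (-I * ϑ x))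
    (hZ : HasDerivAt Z Z' t) (hϑ : HasDerivAt ϑ ϑ' t) :
    deriv riemannZeta (1 / 2 + I * t) = 0 ↔ (Z' - ϑ' * Z t * I : ℂ) = 0 := by
  rw [← mul_eq_zero_iff_right I_ne_zero, deriv_riemannZeta_mul_I_eq hRS hZ hϑ,
    mul_eq_zero_iff_right (Complex.exp_ne_zero _)]

lemma one_add_div_mul_eq_conj {Z Z' ϑ' : ℝ} {ζ D e : ℂ} (hD : D ≠ 0) (hζ : ζ = Z * e)
    (hDI : D * I = (Z' - ϑ' * Z * I) * e) :
    (1 + 2 * ϑ' * ζ / D) * (Z' - ϑ' * Z * I) = conj (Z' - ϑ' * Z * I : ℂ) := by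
  have hquot : ζ / D * (Z' - ϑ' * Z * I) = Z * I := by
    rw [div_mul_eq_mul_div, div_eq_iff hD, hζ]
    linear_combination -Z * hDI
  simp only [map_sub, map_mul, conj_ofReal, conj_I]
  linear_combination 2 * ϑ' * hquot

end KappaDerivative

theorem kappa_deriv_formula
    (Z ϑ Z' Z'' ϑ' ϑ'' κ κ' : ℝ → ℝ)
    (hZa : ∀ t : ℝ, AnalyticAt ℝ Z t) (hϑa : ∀ t : ℝ, AnalyticAt ℝ ϑ t)
    (hκa : ∀ t : ℝ, AnalyticAt ℝ κ t)
    (hRS : ∀ t : ℝ, riemannZeta (1 / 2 + Complex.I * (t : ℂ)) =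
      (Z t : ℂ) * Complex.exp (-Complex.I * (ϑ t : ℂ)))
    (hZ' : ∀ t : ℝ, HasDerivAt Z (Z' t) t)
    (hZ'' : ∀ t : ℝ, HasDerivAt Z' (Z'' t) t)
    (hϑ' : ∀ t : ℝ, HasDerivAt ϑ (ϑ' t) t)
    (hϑ'' : ∀ t : ℝ, HasDerivAt ϑ' (ϑ'' t) t)
    (hκ' : ∀ t : ℝ, HasDerivAt κ (κ' t) t)
    (hκ : ∀ t : ℝ, deriv riemannZeta (1 / 2 + Complex.I * (t : ℂ)) ≠ 0 →
      Complex.exp (2 * π * Complex.I * (κ t : ℂ)) =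
        1 + 2 * (ϑ' t : ℂ) * riemannZeta (1 / 2 + Complex.I * (t : ℂ)) /
          deriv riemannZeta (1 / 2 + Complex.I * (t : ℂ)))
    (hκ0 : κ 0 = -(1 / 2))
    (t : ℝ) (hnot : ¬(Z t = 0 ∧ Z' t = 0)) :
    π * κ' t =
      (Z t * Z' t * ϑ'' t + (Z' t) ^ 2 * ϑ' t - Z t * Z'' t * ϑ' t) /
        ((Z' t) ^ 2 + (Z t) ^ 2 * (ϑ' t) ^ 2) := by
  let W (x : ℝ) : ℂ := Z' x - ϑ' x * Z x * I
  have hW := (hZ'' t).ofReal_comp.fun_sub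
    (((hϑ'' t).ofReal_comp.fun_mul (hZ' t).ofReal_comp).mul_const I)
  have hzero (x : ℝ) := deriv_riemannZeta_eq_zero_iff hRS (hZ' x) (hϑ' x)
  have hne : W t ≠ 0 := fun h ↦ by
    have hζ := riemannZeta_eq_zero_of_deriv_eq_zero ((hzero t).2 h)
    have hZ : Z t = 0 :=
      ofReal_eq_zero.1 ((mul_eq_zero_iff_right (Complex.exp_ne_zero _)).1 (hRS t ▸ hζ))
    exact hnot ⟨hZ, by simpa [W, hZ] using h⟩
  have hconj : ∀ᶠ x in nhds t, exp (2 * π * I * (κ x : ℂ)) * W x = starRingEnd ℂ (W x) := by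
    filter_upwards [hW.continuousAt.eventually_ne hne] with x hx
    have hD := mt (hzero x).1 hx
    rw [hκ x hD, one_add_div_mul_eq_conj hD (hRS x)
      (deriv_riemannZeta_mul_I_eq hRS (hZ' x) (hϑ' x))]
  rw [pi_mul_deriv_eq_neg_im_div (hκ' t) hW hne hconj, div_im]
  simp only [sub_im, ofReal_im, mul_im, add_re, mul_re, ofReal_re, mul_zero, sub_zero, I_im,
    mul_one, add_im, zero_mul, add_zero, I_re, zero_sub, neg_add_rev, sub_re, sub_self,
    normSq_apply, mul_neg, neg_mul, neg_neg, neg_sub]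
  ring
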